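/- Let d ∈ (1/4, 1/2), λ > 0, t > 0, m ≥ 2, and define h_t^λ(x₁, x₂) = ∫_0^t e^{−λ(s−x₁)_+} e^{−λ(s−x₂)_+} (s−x₁)_+^{d−1} (s−x₂)_+^{d−1} ds for (x₁,x₂) ∈ ℝ². Then, with indices taken cyclically (x_{m+1} = x_1, s_{m+1} = s_1), ∫_{ℝ^m} ∏_{j=1}^m h_t^λ(x_j, x_{j+1}) dx_1 ⋯ dx_m = ∫_0^t ⋯ ∫_0^t ∏_{j=1}^m G_λ(s_j, s_{j+1}) ds_1 ⋯ ds_m, where G_λ(u,v) = (|u−v|/2)^{2d−1} ∫_1^∞ (w² − 1)^{d−1} e^{−λ|u−v| w} dw for u ≠ v. -/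

import Mathlib

open MeasureTheory Real Set

/-- The kernel `h_t^λ(x₁,x₂)` of the tempered Rosenblatt process. -/
noncomputable def tRosKernel (d lam t : ℝ) (x₁ x₂ : ℝ) : ℝ :=
  ∫ s in Set.Ioc (0 : ℝ) t,
    Real.exp (-lam * max (s - x₁) 0) * Real.exp (-lam * max (s - x₂) 0) *
      (max (s - x₁) 0) ^ (d - 1) * (max (s - x₂) 0) ^ (d - 1)

/-- `G_λ(u,v) = (|u−v|/2)^{2d−1} ∫_1^∞ (w²−1)^{d−1} e^{−λ|u−v|w} dw`. -/
noncomputable def besselG (d lam u v : ℝ) : ℝ :=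
  (|u - v| / 2) ^ (2 * d - 1) *
    ∫ w in Set.Ioi (1 : ℝ), (w ^ 2 - 1) ^ (d - 1) * Real.exp (-lam * |u - v| * w)

/-!
The kernel factors as `h_t^λ(x, y) = ∫_0^t k(s - x) k(s - y) ds` with `k(z) = z_+^{d-1} e^{-λ z_+}`.
Expanding the cyclic product of the `h_t^λ(x_j, x_{j+1})` and integrating out the `x_j` first
(Tonelli) pairs the two factors in which each `x_j` occurs, so what remains is the cyclic product of
the integrals `∫ k(u - x) k(v - x) dx`. The substitution that sends `w = 1` to `x = min u v` and
`w = -1` to `x = max u v` turns these into `G_λ(u, v)`. The diagonals `x_j = x_{j+1}`, where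
`h_t^λ` is infinite for `d ≤ 1/2`, are null sets.
-/

open scoped ENNReal

section ProductMeasure

variable {ι : Type*} [Fintype ι]

theorem lintegral_fin_nat_prod_eq_prod {n : ℕ} {E : Fin n → Type*}
    {mE : ∀ i, MeasurableSpace (E i)} {μ : ∀ i, Measure (E i)} [∀ i, SigmaFinite (μ i)]
    {f : ∀ i, E i → ℝ≥0∞} (hf : ∀ i, AEMeasurable (f i) (μ i)) :
    ∫⁻ x, ∏ i, f i (x i) ∂Measure.pi μ = ∏ i, ∫⁻ x, f i x ∂μ i := by
  induction n with
  | zero => simp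
  | succ n ih =>
    have tail_aemeasurable : AEMeasurable (fun y : ∀ i : Fin n, E i.succ => ∏ i, f i.succ (y i))
        (Measure.pi fun i => μ i.succ) :=
      Finset.aemeasurable_fun_prod _ fun i _ =>
        (hf i.succ).comp_quasiMeasurePreserving (Measure.quasiMeasurePreserving_eval _ i)
    calc
      _ = ∫⁻ p : E 0 × ∀ i : Fin n, E i.succ, f 0 p.1 * ∏ i, f i.succ (p.2 i)
            ∂(μ 0).prod (Measure.pi fun i => μ i.succ) := by
        rw [← (measurePreserving_piFinSuccAbove μ 0).symm.lintegral_comp_emb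
          (MeasurableEquiv.measurableEmbedding _)]
        exact lintegral_congr fun p => Fin.prod_univ_succ _
      _ = ∏ i, ∫⁻ x, f i x ∂μ i := by
        rw [lintegral_prod_mul (hf 0) tail_aemeasurable, ih fun i => hf i.succ,
          Fin.prod_univ_succ]

theorem lintegral_fintype_prod_eq_prod {E : ι → Type*}
    {mE : ∀ i, MeasurableSpace (E i)} {μ : ∀ i, Measure (E i)} [∀ i, SigmaFinite (μ i)]
    {f : ∀ i, E i → ℝ≥0∞} (hf : ∀ i, AEMeasurable (f i) (μ i)) :
    ∫⁻ x, ∏ i, f i (x i) ∂Measure.pi μ = ∏ i, ∫⁻ x, f i x ∂μ i := by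
  let e := (Fintype.equivFin ι).symm
  rw [← (measurePreserving_piCongrLeft μ e).lintegral_comp_emb
    (MeasurableEquiv.measurableEmbedding _)]
  simp_rw [← e.prod_comp, MeasurableEquiv.coe_piCongrLeft, Equiv.piCongrLeft_apply_apply]
  exact lintegral_fin_nat_prod_eq_prod fun i => hf (e i)

theorem ae_apply_ne_apply {i j : ι} (hij : i ≠ j) : ∀ᵐ x : ι → ℝ, x i ≠ x j := by
  classical
  let L : (ι → ℝ) →ₗ[ℝ] ℝ := LinearMap.proj (R := ℝ) (φ := fun _ => ℝ) i - LinearMap.proj j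
  have ker_ne_top : LinearMap.ker L ≠ ⊤ := by
    intro h
    have : Pi.single i 1 ∈ LinearMap.ker L := h ▸ Submodule.mem_top
    simp [L, hij.symm] at this
  have ker_eq : {x : ι → ℝ | ¬x i ≠ x j} = LinearMap.ker L := by
    ext x
    simp [L, sub_eq_zero]
  rw [ae_iff, ker_eq]
  exact Measure.addHaar_submodule volume _ ker_ne_top

variable {α β : Type*} [MeasurableSpace β]

theorem aestronglyMeasurable_prod_apply_apply {f : β → β → ℝ}
    {μ : Measure (ι → β)} (hf : StronglyMeasurable fun p : β × β => f p.1 p.2) (σ : ι → ι) :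
    AEStronglyMeasurable (fun x : ι → β => ∏ j, f (x j) (x (σ j))) μ :=
  (Finset.stronglyMeasurable_fun_prod _ fun j _ =>
    hf.comp_measurable (g := fun x : ι → β => (x j, x (σ j)))
      (by fun_prop)).aestronglyMeasurable

variable {ν : Measure β} [SigmaFinite ν] {K L : α → β → ℝ≥0∞}

theorem lintegral_prod_mul_prod_perm (hK : ∀ s, Measurable (K s)) (hL : ∀ s, Measurable (L s))
    (σ : Equiv.Perm ι) (s : ι → α) :
    ∫⁻ x, ∏ j, (K (s j) (x j) * L (s j) (x (σ j))) ∂(Measure.pi fun _ : ι => ν) =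
      ∏ j, ∫⁻ y, K (s (σ j)) y * L (s j) y ∂ν := by
  have prod_eq (x : ι → β) : ∏ j, (K (s j) (x j) * L (s j) (x (σ j))) =
      ∏ j, (K (s j) (x j) * L (s (σ.symm j)) (x j)) := by
    rw [Finset.prod_mul_distrib, Finset.prod_mul_distrib,
      ← Equiv.prod_comp σ fun j => L (s (σ.symm j)) (x j)]
    simp only [Equiv.symm_apply_apply]
  simp_rw [prod_eq]
  rw [lintegral_fintype_prod_eq_prod (f := fun j y => K (s j) y * L (s (σ.symm j)) y)
    fun j => ((hK _).mul (hL _)).aemeasurable, ← Equiv.prod_comp σ]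
  simp only [Equiv.symm_apply_apply]

/- For a cyclic `σ` this is the identity `tr ((KᵀL)^m) = tr ((LKᵀ)^m)` between the traces of
integral operators with kernels `K` and `L`. -/
theorem lintegral_prod_lintegral_mul_perm [MeasurableSpace α] {μ : Measure α} [SigmaFinite μ]
    (hK : Measurable (Function.uncurry K)) (hL : Measurable (Function.uncurry L))
    (σ : Equiv.Perm ι) :
    ∫⁻ x, ∏ j, ∫⁻ s, K s (x j) * L s (x (σ j)) ∂μ ∂(Measure.pi fun _ => ν) =
      ∫⁻ s, ∏ j, ∫⁻ y, K (s (σ j)) y * L (s j) y ∂ν ∂(Measure.pi fun _ => μ) := by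
  have expand (x : ι → β) : ∏ j, ∫⁻ s, K s (x j) * L s (x (σ j)) ∂μ =
      ∫⁻ s, ∏ j, (K (s j) (x j) * L (s j) (x (σ j))) ∂(Measure.pi fun _ => μ) :=
    (lintegral_fintype_prod_eq_prod (f := fun j s => K s (x j) * L s (x (σ j))) fun _ =>
      (hK.of_uncurry_right.mul hL.of_uncurry_right).aemeasurable).symm
  have integrand_measurable : Measurable fun p : (ι → β) × (ι → α) =>
      ∏ j, (K (p.2 j) (p.1 j) * L (p.2 j) (p.1 (σ j))) :=
    Finset.measurable_fun_prod _ fun j _ =>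
      (hK.comp (g := Function.uncurry K) (f := fun p : (ι → β) × (ι → α) => (p.2 j, p.1 j))
        (by fun_prop)).mul
      (hL.comp (g := Function.uncurry L) (f := fun p : (ι → β) × (ι → α) => (p.2 j, p.1 (σ j)))
        (by fun_prop))
  simp_rw [expand]
  rw [lintegral_lintegral_swap integrand_measurable.aemeasurable]
  exact lintegral_congr fun s => lintegral_prod_mul_prod_perm (K := K) (L := L)
    (fun _ => hK.of_uncurry_left) (fun _ => hL.of_uncurry_left) σ s

end ProductMeasure

/-- The one-sided tempered power `z_+^{d-1} e^{-λ z_+}`, the building block of both kernels: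
products of two of its translates integrate to `tRosKernel` in time and to `besselG` in space.
The value is `0` for `z ≤ 0` whatever `d` is, so that `z_+^{d-1}` carries no `0 ^ 0` convention. -/
noncomputable def temperedPower (d lam : ℝ) : ℝ → ℝ :=
  (Ioi 0).indicator fun z => z ^ (d - 1) * exp (-lam * z)

section TemperedPower

variable {d lam z a x y u v : ℝ}

theorem temperedPower_of_pos (hz : 0 < z) :
    temperedPower d lam z = z ^ (d - 1) * exp (-lam * z) :=
  indicator_of_mem (mem_Ioi.2 hz) _

theorem temperedPower_of_nonpos (hz : z ≤ 0) : temperedPower d lam z = 0 :=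
  indicator_of_notMem (notMem_Ioi.2 hz) _

theorem temperedPower_nonneg : 0 ≤ temperedPower d lam z :=
  indicator_nonneg (fun z (hz : 0 < z) => by positivity) z

@[fun_prop]
theorem measurable_temperedPower : Measurable (temperedPower d lam) :=
  Measurable.indicator (by fun_prop) measurableSet_Ioi

/- At `d = 1` the left side is `1` for `z ≤ 0`, since `0 ^ 0 = 1`. -/
theorem exp_mul_rpow_max_eq_temperedPower (hd : d ≠ 1) :
    exp (-lam * max z 0) * max z 0 ^ (d - 1) = temperedPower d lam z := by
  rcases lt_or_ge 0 z with hz | hz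
  · rw [max_eq_left hz.le, temperedPower_of_pos hz, mul_comm]
  · rw [max_eq_right hz, temperedPower_of_nonpos hz, zero_rpow (sub_ne_zero.2 hd), mul_zero]

theorem integrable_temperedPower (hd : 0 < d) (hlam : 0 < lam) :
    Integrable (temperedPower d lam) := by
  rw [temperedPower, integrable_indicator_iff measurableSet_Ioi]
  simpa only [rpow_one] using
    integrableOn_rpow_mul_exp_neg_mul_rpow (p := 1) (by linarith) one_pos hlam

theorem exists_forall_ge_temperedPower_le (d : ℝ) (hlam : 0 < lam) (ha : 0 < a) :
    ∃ C, ∀ z ≥ a, temperedPower d lam z ≤ C := by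
  let f : ℝ → ℝ := fun z => z ^ (d - 1) * exp (-lam * z)
  obtain ⟨N, hN⟩ := Filter.eventually_atTop.1 <|
    (tendsto_rpow_mul_exp_neg_mul_atTop_nhds_zero (d - 1) lam hlam).eventually_le_const one_pos
  have f_continuousOn : ContinuousOn f (Icc a N) := by
    refine ContinuousOn.mul (continuousOn_id.rpow_const fun z hz => ?_) (by fun_prop)
    exact Or.inl (ha.trans_le hz.1).ne'
  obtain ⟨C, hC⟩ := isCompact_Icc.bddAbove_image f_continuousOn
  refine ⟨max C 1, fun z hz => ?_⟩
  rw [temperedPower_of_pos (ha.trans_le hz)]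
  rcases le_total z N with hzN | hNz
  · exact le_max_of_le_left (hC (mem_image_of_mem f ⟨hz, hzN⟩))
  · exact le_max_of_le_right (hN z hNz)

theorem integrable_temperedPower_mul_add (hd : 0 < d) (hlam : 0 < lam) (ha : 0 < a) :
    Integrable fun z => temperedPower d lam z * temperedPower d lam (z + a) := by
  obtain ⟨C, hC⟩ := exists_forall_ge_temperedPower_le d hlam ha
  refine ((integrable_temperedPower hd hlam).mul_const C).mono'
    (Measurable.aestronglyMeasurable (by fun_prop)) (ae_of_all _ fun z => ?_)
  rw [norm_of_nonneg (mul_nonneg temperedPower_nonneg temperedPower_nonneg)]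
  rcases lt_or_ge 0 z with hz | hz
  · exact mul_le_mul_of_nonneg_left (hC _ (by linarith)) temperedPower_nonneg
  · simp only [temperedPower_of_nonpos hz, zero_mul, le_refl]

theorem integrable_temperedPower_sub_right_mul (hd : 0 < d) (hlam : 0 < lam) (hxy : x ≠ y) :
    Integrable fun s => temperedPower d lam (s - x) * temperedPower d lam (s - y) := by
  wlog h : y < x generalizing x y
  · simpa only [mul_comm] using this hxy.symm (lt_of_le_of_ne (not_lt.1 h) hxy)
  simpa only [sub_add_sub_cancel] using
    (integrable_temperedPower_mul_add hd hlam (sub_pos.2 h)).comp_sub_right x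

theorem integrable_temperedPower_sub_left_mul (hd : 0 < d) (hlam : 0 < lam) (huv : u ≠ v) :
    Integrable fun x => temperedPower d lam (u - x) * temperedPower d lam (v - x) := by
  simpa only [sub_neg_eq_add, neg_add_eq_sub] using
    (integrable_temperedPower_sub_right_mul hd hlam (neg_injective.ne huv)).comp_neg

theorem temperedPower_mul_temperedPower_affine (ha : 0 < a) (w : ℝ) :
    temperedPower d lam (a / 2 * (w - 1)) * temperedPower d lam (a / 2 * (w - 1) + a) =
      (Ioi 1).indicator
        (fun w => (a / 2) ^ (2 * d - 2) * ((w ^ 2 - 1) ^ (d - 1) * exp (-lam * a * w))) w := by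
  rcases lt_or_ge 1 w with hw | hw
  · have hw_sub : 0 < w - 1 := by linarith
    have hw_add : 0 < w + 1 := by linarith
    rw [indicator_of_mem (mem_Ioi.2 hw), show a / 2 * (w - 1) + a = a / 2 * (w + 1) by ring,
      temperedPower_of_pos (by positivity), temperedPower_of_pos (by positivity),
      mul_rpow (by positivity) hw_sub.le, mul_rpow (by positivity) hw_add.le,
      show w ^ 2 - 1 = (w - 1) * (w + 1) by ring, mul_rpow hw_sub.le hw_add.le,
      show 2 * d - 2 = (d - 1) + (d - 1) by ring, rpow_add (by positivity),
      show -lam * a * w = -lam * (a / 2 * (w - 1)) + -lam * (a / 2 * (w + 1)) by ring, exp_add]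
    ring
  · rw [indicator_of_notMem (notMem_Ioi.2 hw), temperedPower_of_nonpos, zero_mul]
    exact mul_nonpos_of_nonneg_of_nonpos (by positivity) (by linarith)

end TemperedPower

section BesselG

variable {d lam u v : ℝ}

theorem besselG_comm (d lam u v : ℝ) : besselG d lam u v = besselG d lam v u := by
  rw [besselG, besselG, abs_sub_comm]

theorem besselG_nonneg (d lam u v : ℝ) : 0 ≤ besselG d lam u v := by
  refine mul_nonneg (by positivity) (setIntegral_nonneg measurableSet_Ioi fun w hw => ?_)
  have : 0 ≤ w ^ 2 - 1 := by nlinarith [mem_Ioi.1 hw]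
  positivity

theorem stronglyMeasurable_besselG (d lam : ℝ) :
    StronglyMeasurable fun p : ℝ × ℝ => besselG d lam p.1 p.2 := by
  refine StronglyMeasurable.mul (Measurable.stronglyMeasurable (by fun_prop))
    (StronglyMeasurable.integral_prod_right' (f := fun q : (ℝ × ℝ) × ℝ =>
      (q.2 ^ 2 - 1) ^ (d - 1) * exp (-lam * |q.1.1 - q.1.2| * q.2)) ?_)
  exact Measurable.stronglyMeasurable (by fun_prop)

theorem integral_temperedPower_mul_eq_besselG (huv : u ≠ v) :
    ∫ x, temperedPower d lam (u - x) * temperedPower d lam (v - x) = besselG d lam u v := by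
  wlog h : u < v generalizing u v
  · simpa only [mul_comm, besselG_comm d lam u v] using
      this huv.symm (lt_of_le_of_ne (not_lt.1 h) huv.symm)
  obtain ⟨a, ha, rfl⟩ : ∃ a, 0 < a ∧ u + a = v := ⟨v - u, sub_pos.2 h, by ring⟩
  let φ : ℝ → ℝ := fun z => temperedPower d lam z * temperedPower d lam (z + a)
  calc
    _ = ∫ x, φ (u - x) := by simp only [φ, sub_add_eq_add_sub]
    _ = ∫ z, φ z := integral_sub_left_eq_self φ volume u
    _ = a / 2 * ∫ w, φ (a / 2 * (w - 1)) := by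
      rw [integral_sub_right_eq_self (fun w => φ (a / 2 * w)), Measure.integral_comp_mul_left,
        abs_of_pos (by positivity), smul_eq_mul, mul_inv_cancel_left₀ (by positivity)]
    _ = a / 2 * (a / 2) ^ (2 * d - 2) *
          ∫ w in Ioi 1, (w ^ 2 - 1) ^ (d - 1) * exp (-lam * a * w) := by
      simp only [φ, temperedPower_mul_temperedPower_affine ha]
      rw [integral_indicator measurableSet_Ioi, integral_const_mul, mul_assoc]
    _ = besselG d lam u (u + a) := by
      rw [besselG, sub_add_cancel_left, abs_neg, abs_of_pos ha,
        show 2 * d - 1 = 1 + (2 * d - 2) by ring, rpow_add (by positivity), rpow_one]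

theorem ofReal_besselG_eq_lintegral (hd : 0 < d) (hlam : 0 < lam) (huv : u ≠ v) :
    ENNReal.ofReal (besselG d lam u v) =
      ∫⁻ x, ENNReal.ofReal (temperedPower d lam (u - x)) *
        ENNReal.ofReal (temperedPower d lam (v - x)) := by
  simp_rw [← ENNReal.ofReal_mul temperedPower_nonneg]
  rw [← integral_temperedPower_mul_eq_besselG huv, ofReal_integral_eq_lintegral_ofReal
    (integrable_temperedPower_sub_left_mul hd hlam huv)
    (ae_of_all _ fun _ => mul_nonneg temperedPower_nonneg temperedPower_nonneg)]

end BesselG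

section RosenblattKernel

variable {d lam x y : ℝ}

theorem tRosKernel_eq_integral_temperedPower (hd : d ≠ 1) (lam t x y : ℝ) :
    tRosKernel d lam t x y =
      ∫ s in Ioc 0 t, temperedPower d lam (s - x) * temperedPower d lam (s - y) := by
  simp_rw [← exp_mul_rpow_max_eq_temperedPower hd]
  exact integral_congr_ae (ae_of_all _ fun s => by ring)

theorem tRosKernel_nonneg (d lam t x y : ℝ) : 0 ≤ tRosKernel d lam t x y :=
  integral_nonneg fun s => by positivity

theorem stronglyMeasurable_tRosKernel (d lam t : ℝ) :
    StronglyMeasurable fun p : ℝ × ℝ => tRosKernel d lam t p.1 p.2 :=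
  StronglyMeasurable.integral_prod_right' (f := fun q : (ℝ × ℝ) × ℝ =>
    exp (-lam * max (q.2 - q.1.1) 0) * exp (-lam * max (q.2 - q.1.2) 0) *
      max (q.2 - q.1.1) 0 ^ (d - 1) * max (q.2 - q.1.2) 0 ^ (d - 1))
    (Measurable.stronglyMeasurable (by fun_prop))

theorem ofReal_tRosKernel_eq_lintegral (hd₀ : 0 < d) (hd₁ : d ≠ 1) (hlam : 0 < lam) (t : ℝ)
    (hxy : x ≠ y) :
    ENNReal.ofReal (tRosKernel d lam t x y) =
      ∫⁻ s in Ioc 0 t, ENNReal.ofReal (temperedPower d lam (s - x)) *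
        ENNReal.ofReal (temperedPower d lam (s - y)) := by
  simp_rw [← ENNReal.ofReal_mul temperedPower_nonneg]
  rw [tRosKernel_eq_integral_temperedPower hd₁, ofReal_integral_eq_lintegral_ofReal
    (integrable_temperedPower_sub_right_mul hd₀ hlam hxy).restrict
    (ae_of_all _ fun _ => mul_nonneg temperedPower_nonneg temperedPower_nonneg)]

end RosenblattKernel

section CumulantFormula

theorem mk_add_one_mod_eq_finRotate {m : ℕ} (j : Fin m) (h : ((j : ℕ) + 1) % m < m) :
    (⟨((j : ℕ) + 1) % m, h⟩ : Fin m) = finRotate m j := by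
  have := j.neZero
  rw [finRotate_apply]
  ext
  simp [Fin.val_add]

variable {d lam : ℝ}

theorem lintegral_ofReal_prod_tRosKernel_perm {ι : Type*} [Fintype ι] (hd₀ : 0 < d) (hd₁ : d ≠ 1)
    (hlam : 0 < lam) (t : ℝ) (σ : Equiv.Perm ι) (hσ : ∀ j, σ j ≠ j) :
    ∫⁻ x : ι → ℝ, ENNReal.ofReal (∏ j, tRosKernel d lam t (x j) (x (σ j))) =
      ∫⁻ s in univ.pi fun _ : ι => Ioc 0 t,
        ENNReal.ofReal (∏ j, besselG d lam (s j) (s (σ j))) := by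
  let K : ℝ → ℝ → ℝ≥0∞ := fun s x => ENNReal.ofReal (temperedPower d lam (s - x))
  have K_measurable : Measurable (Function.uncurry K) :=
    Measurable.ennreal_ofReal (by fun_prop)
  have off_diagonal : ∀ᵐ x : ι → ℝ, ∀ j, x j ≠ x (σ j) :=
    ae_all_iff.2 fun j => ae_apply_ne_apply (hσ j).symm
  calc
    _ = ∫⁻ x : ι → ℝ, ∏ j, ∫⁻ s in Ioc 0 t, K s (x j) * K s (x (σ j)) := by
      refine lintegral_congr_ae (off_diagonal.mono fun x hx => ?_)
      simp only [ENNReal.ofReal_prod_of_nonneg fun _ _ => tRosKernel_nonneg d lam t _ _,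
        fun j => ofReal_tRosKernel_eq_lintegral hd₀ hd₁ hlam t (hx j), K]
    _ = ∫⁻ s in univ.pi fun _ : ι => Ioc 0 t, ∏ j, ∫⁻ x, K (s (σ j)) x * K (s j) x := by
      rw [volume_pi, Measure.restrict_pi_pi,
        lintegral_prod_lintegral_mul_perm K_measurable K_measurable]
    _ = _ := by
      refine lintegral_congr_ae ((ae_restrict_of_ae off_diagonal).mono fun s hs => ?_)
      simp only [ENNReal.ofReal_prod_of_nonneg fun _ _ => besselG_nonneg d lam _ _]
      exact Finset.prod_congr rfl fun j _ => by
        rw [besselG_comm, ofReal_besselG_eq_lintegral hd₀ hlam (hs j).symm]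

/- By power counting on the diagonal, `∏ |s_j - s_{j+1}| ^ (2d - 1)` is integrable over a cycle of
length `m` exactly when `2md > 1`. For `0 < 2md ≤ 1` both sides are the junk value `0` of a
divergent integral. -/
theorem stmt14_general {m : ℕ} (hm : 2 ≤ m) (hd : 1 < 2 * m * d) (hd₁ : d ≠ 1) (hlam : 0 < lam)
    (t : ℝ) :
    ∫ x : Fin m → ℝ, ∏ j, tRosKernel d lam t (x j) (x (finRotate m j)) =
      ∫ s in univ.pi fun _ : Fin m => Ioc 0 t, ∏ j, besselG d lam (s j) (s (finRotate m j)) := by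
  have hd₀ : 0 < d := pos_of_mul_pos_right (one_pos.trans hd) (by positivity)
  have rotate_ne (j : Fin m) : finRotate m j ≠ j :=
    Equiv.Perm.mem_support.1 (support_finRotate_of_le hm ▸ Finset.mem_univ j)
  rw [integral_eq_lintegral_of_nonneg_ae
      (ae_of_all _ fun _ => Finset.prod_nonneg fun _ _ => tRosKernel_nonneg ..)
      (aestronglyMeasurable_prod_apply_apply (stronglyMeasurable_tRosKernel d lam t) _),
    integral_eq_lintegral_of_nonneg_ae
      (ae_of_all _ fun _ => Finset.prod_nonneg fun _ _ => besselG_nonneg ..)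
      (aestronglyMeasurable_prod_apply_apply (stronglyMeasurable_besselG d lam) _),
    lintegral_ofReal_prod_tRosKernel_perm hd₀ hd₁ hlam t _ rotate_ne]

end CumulantFormula

theorem stmt14 (d : ℝ) (hd₁ : 1/4 < d) (hd₂ : d < 1/2)
    (lam : ℝ) (hlam : 0 < lam) (t : ℝ) (ht : 0 < t)
    (m : ℕ) (hm : 2 ≤ m) :
    (∫ x : Fin m → ℝ, ∏ j : Fin m,
        tRosKernel d lam t (x j) (x ⟨((j : ℕ) + 1) % m, Nat.mod_lt _ (by omega)⟩)) =
      ∫ s in Set.univ.pi (fun _ : Fin m => Set.Ioc (0 : ℝ) t), ∏ j : Fin m,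
        besselG d lam (s j) (s ⟨((j : ℕ) + 1) % m, Nat.mod_lt _ (by omega)⟩) := by
  have hm' : (2 : ℝ) ≤ m := by exact_mod_cast hm
  have hmd : 1 < 2 * m * d := by nlinarith
  simpa only [mk_add_one_mod_eq_finRotate] using stmt14_general hm hmd (by linarith) hlam t
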